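/- arXiv:math/0306434 — 3 statements merged into one kernel-verified Lean document; each statement's English description precedes it below -/
import Mathlib

section
/- Let ν be a partition with l = l(ν) parts. In the polynomial ring ℤ[t], ∏_{(i,j) a cell of ν} (1 − t^{h(i,j)}) · ∏_{1≤a<b≤l} (1 − t^{ν_a − ν_b − a + b}) = ∏_{1≤a<b≤l} (1 − t^{b−a}) · ∏_{i=1}^{l} ∏_{j=1}^{ν_i} (1 − t^{j − i + l}). (All exponents appearing are positive integers.) -/
open Finset Polynomial

/-!
Put `β i = ν i + l - i`. In row `i` the hook lengths are pairwise distinct, and so are the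
differences `β i - β b` with `b > i`. No hook length of the row equals such a difference, since
`j ≤ ν b ↔ b ≤ ν' j`. Both kinds of numbers lie in `{1, …, β i}`, and there are
`ν i + (l - i) = β i` of them in total, so they fill that interval. On the right-hand side the
exponents of row `i` are `1, …, l - i` followed by `l - i + 1, …, β i`, which is the same interval.
The identity therefore holds row by row, for an arbitrary sequence in place of `1 - t ^ k`.
-/

/-- The part `ν'_j` of the conjugate of the partition `ν 1 ≥ … ≥ ν l`. Only the values of `ν` on
`{1, …, l}` matter, and some of them may be zero. -/
def conjugatePart (l : ℕ) (ν : ℕ → ℕ) (j : ℕ) : ℕ := #{i ∈ Icc 1 l | j ≤ ν i}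

/-- The hook length of the cell `(i, j)` of the partition `ν 1 ≥ … ≥ ν l`. The subtraction is
truncated, so that the value is meaningful only if `(i, j)` is a cell. -/
def hookLength (l : ℕ) (ν : ℕ → ℕ) (i j : ℕ) : ℕ := ν i + conjugatePart l ν j + 1 - i - j

/-- The difference `β a - β b` of the beta numbers `β i = ν i + l - i` of a partition with `l`
parts, which does not depend on `l`. The subtractions are truncated, so that the value is
meaningful only if `ν b ≤ ν a` and `a ≤ b`. -/
def betaDiff (ν : ℕ → ℕ) (a b : ℕ) : ℕ := ν a - ν b + (b - a)

section Row

variable {l : ℕ} {ν : ℕ → ℕ} {i j b : ℕ}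

theorem conjugatePart_le : conjugatePart l ν j ≤ l := by
  simpa [conjugatePart] using card_filter_le (Icc 1 l) (j ≤ ν ·)

theorem conjugatePart_antitone : Antitone (conjugatePart l ν) := fun _ _ hjk =>
  card_le_card (monotone_filter_right _ fun _ _ hk => hjk.trans hk)

theorem le_conjugatePart_iff (hν : AntitoneOn ν (Set.Icc 1 l)) (hb : b ∈ Set.Icc 1 l) :
    b ≤ conjugatePart l ν j ↔ j ≤ ν b := by
  constructor
  · contrapose!
    intro hj
    have hsub : {i ∈ Icc 1 l | j ≤ ν i} ⊆ Ico 1 b := fun i hi => by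
      simp only [mem_filter, mem_Icc, mem_Ico] at hi ⊢
      by_contra! hbi
      exact hj.not_ge (hi.2.trans (hν hb hi.1 (hbi hi.1.1)))
    calc conjugatePart l ν j ≤ #(Ico 1 b) := card_le_card hsub
      _ = b - 1 := Nat.card_Ico 1 b
      _ < b := Nat.sub_one_lt_of_lt hb.1
  · intro hj
    have hsub : Icc 1 b ⊆ {i ∈ Icc 1 l | j ≤ ν i} := fun i hi => by
      simp only [mem_filter, mem_Icc] at hi ⊢
      have hil : i ∈ Set.Icc 1 l := ⟨hi.1, hi.2.trans hb.2⟩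
      exact ⟨hil, hj.trans (hν hil hb hi.2)⟩
    calc b = #(Icc 1 b) := (Nat.card_Icc 1 b).symm
      _ ≤ conjugatePart l ν j := card_le_card hsub

theorem hookLength_add_add (hν : AntitoneOn ν (Set.Icc 1 l)) (hi : i ∈ Set.Icc 1 l)
    (hj : j ≤ ν i) : hookLength l ν i j + i + j = ν i + conjugatePart l ν j + 1 := by
  have := (le_conjugatePart_iff hν hi).2 hj
  unfold hookLength
  omega

theorem betaDiff_add_add (hν : AntitoneOn ν (Set.Icc 1 l)) (hi : i ∈ Set.Icc 1 l)
    (hb : b ∈ Set.Icc i l) : betaDiff ν i b + ν b + i = ν i + b := by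
  have := hν hi ⟨hi.1.trans hb.1, hb.2⟩ hb.1
  have := hb.1
  unfold betaDiff
  omega

theorem hookLength_strictAntiOn (hν : AntitoneOn ν (Set.Icc 1 l)) (hi : i ∈ Set.Icc 1 l) :
    StrictAntiOn (hookLength l ν i) (Set.Iic (ν i)) := fun j hj k hk hjk => by
  have := hookLength_add_add hν hi hj
  have := hookLength_add_add hν hi hk
  have := conjugatePart_antitone (l := l) (ν := ν) hjk.le
  omega

theorem betaDiff_strictMonoOn (hν : AntitoneOn ν (Set.Icc 1 l)) (hi : i ∈ Set.Icc 1 l) :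
    StrictMonoOn (betaDiff ν i) (Set.Icc i l) := fun a ha b hb hab => by
  have := betaDiff_add_add hν hi ha
  have := betaDiff_add_add hν hi hb
  have := hν ⟨hi.1.trans ha.1, ha.2⟩ ⟨hi.1.trans hb.1, hb.2⟩ hab.le
  omega

theorem hookLength_ne_betaDiff (hν : AntitoneOn ν (Set.Icc 1 l)) (hi : i ∈ Set.Icc 1 l)
    (hj : j ≤ ν i) (hb : b ∈ Set.Icc i l) : hookLength l ν i j ≠ betaDiff ν i b := by
  have hhook := hookLength_add_add hν hi hj
  have hbeta := betaDiff_add_add hν hi hb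
  have hconj := le_conjugatePart_iff (j := j) hν ⟨hi.1.trans hb.1, hb.2⟩
  -- Equality would give `ν' j + ν b + 1 = b + j`.
  rcases le_or_gt j (ν b) with h | h
  · have := hconj.2 h
    omega
  · have := mt hconj.1 h.not_ge
    omega

theorem hookLength_mem_Icc (hν : AntitoneOn ν (Set.Icc 1 l)) (hi : i ∈ Set.Icc 1 l)
    (hj : j ∈ Icc 1 (ν i)) : hookLength l ν i j ∈ Icc 1 (ν i + l - i) := by
  rw [mem_Icc] at hj ⊢
  have := hookLength_add_add hν hi hj.2
  have := (le_conjugatePart_iff hν hi).2 hj.2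
  have := conjugatePart_le (l := l) (ν := ν) (j := j)
  omega

theorem betaDiff_mem_Icc (hb : b ∈ Icc (i + 1) l) : betaDiff ν i b ∈ Icc 1 (ν i + l - i) := by
  rw [mem_Icc] at hb ⊢
  unfold betaDiff
  omega

theorem hookLength_injOn (hν : AntitoneOn ν (Set.Icc 1 l)) (hi : i ∈ Set.Icc 1 l) :
    Set.InjOn (hookLength l ν i) (Icc 1 (ν i)) :=
  (hookLength_strictAntiOn hν hi).injOn.mono fun _ hj => (mem_Icc.1 hj).2

theorem betaDiff_injOn (hν : AntitoneOn ν (Set.Icc 1 l)) (hi : i ∈ Set.Icc 1 l) :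
    Set.InjOn (betaDiff ν i) (Icc (i + 1) l) :=
  (betaDiff_strictMonoOn hν hi).injOn.mono (by simpa using Set.Icc_subset_Icc_left i.le_succ)

theorem disjoint_image_hookLength_image_betaDiff (hν : AntitoneOn ν (Set.Icc 1 l))
    (hi : i ∈ Set.Icc 1 l) :
    Disjoint ((Icc 1 (ν i)).image (hookLength l ν i))
      ((Icc (i + 1) l).image (betaDiff ν i)) := by
  simp only [disjoint_left, mem_image, mem_Icc]
  rintro _ ⟨j, hj, rfl⟩ ⟨b, hb, heq⟩
  exact hookLength_ne_betaDiff hν hi hj.2 ⟨i.le_succ.trans hb.1, hb.2⟩ heq.symm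

theorem image_hookLength_union_image_betaDiff (hν : AntitoneOn ν (Set.Icc 1 l))
    (hi : i ∈ Set.Icc 1 l) :
    (Icc 1 (ν i)).image (hookLength l ν i) ∪ (Icc (i + 1) l).image (betaDiff ν i) =
      Icc 1 (ν i + l - i) := by
  apply eq_of_subset_of_card_le
  · exact union_subset (image_subset_iff.2 fun _ => hookLength_mem_Icc hν hi)
      (image_subset_iff.2 fun _ => betaDiff_mem_Icc)
  · rw [card_union_of_disjoint (disjoint_image_hookLength_image_betaDiff hν hi),
      card_image_of_injOn (hookLength_injOn hν hi), card_image_of_injOn (betaDiff_injOn hν hi)]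
    simp only [Nat.card_Icc]
    omega

end Row

section Product

variable {M : Type*} [CommMonoid M] (f : ℕ → M) {l : ℕ} {ν : ℕ → ℕ} {i : ℕ}

theorem prod_hookLength_mul_prod_betaDiff (hν : AntitoneOn ν (Set.Icc 1 l))
    (hi : i ∈ Set.Icc 1 l) :
    (∏ j ∈ Icc 1 (ν i), f (hookLength l ν i j)) * ∏ b ∈ Icc (i + 1) l, f (betaDiff ν i b) =
      ∏ k ∈ Icc 1 (ν i + l - i), f k := by
  rw [← image_hookLength_union_image_betaDiff hν hi,
    prod_union (disjoint_image_hookLength_image_betaDiff hν hi),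
    prod_image (hookLength_injOn hν hi), prod_image (betaDiff_injOn hν hi)]

theorem prod_Icc_sub_mul_prod_Icc_add_sub (n : ℕ) (hil : i ≤ l) :
    (∏ b ∈ Icc (i + 1) l, f (b - i)) * ∏ j ∈ Icc 1 n, f (j + l - i) =
      ∏ k ∈ Icc 1 (n + l - i), f k := by
  simp only [← Ico_add_one_right_eq_Icc, prod_Ico_eq_prod_range]
  rw [show n + l - i + 1 - 1 = (l - i) + n by omega, prod_range_add, Nat.add_sub_add_right,
    Nat.add_sub_cancel]
  congr 1 <;> refine prod_congr rfl fun k _ => congrArg f ?_ <;> omega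

theorem hook_length_polynomial_identity_general (hν : AntitoneOn ν (Set.Icc 1 l)) :
    (∏ i ∈ Icc 1 l, ∏ j ∈ Icc 1 (ν i), f (hookLength l ν i j)) *
        (∏ a ∈ Icc 1 l, ∏ b ∈ Icc (a + 1) l, f (betaDiff ν a b)) =
      (∏ a ∈ Icc 1 l, ∏ b ∈ Icc (a + 1) l, f (b - a)) *
        (∏ i ∈ Icc 1 l, ∏ j ∈ Icc 1 (ν i), f (j + l - i)) := by
  rw [← prod_mul_distrib, ← prod_mul_distrib]
  refine prod_congr rfl fun i hi => ?_
  rw [mem_Icc] at hi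
  rw [prod_hookLength_mul_prod_betaDiff f hν hi, prod_Icc_sub_mul_prod_Icc_add_sub f (ν i) hi.2]

end Product

/-- the hook length identity in `ℤ[t]`: for a partition `ν` with `l` parts
(indexed `1,…,l`), conjugate `ν'`, hook lengths `h(i,j) = ν i + ν' j + 1 − i − j`,
`∏_{cells} (1 − t^{h(i,j)}) · ∏_{a<b} (1 − t^{ν_a − ν_b − a + b})
 = ∏_{a<b} (1 − t^{b−a}) · ∏_{i=1}^{l} ∏_{j=1}^{ν_i} (1 − t^{j − i + l})`. -/
theorem hook_length_polynomial_identity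
    (l : ℕ) (ν : ℕ → ℕ)
    (hanti : ∀ a b : ℕ, 1 ≤ a → a ≤ b → b ≤ l → ν b ≤ ν a)
    (hpos : ∀ i : ℕ, 1 ≤ i → i ≤ l → 0 < ν i)
    (ν' : ℕ → ℕ)
    (hν' : ∀ j : ℕ, ν' j = ((Finset.Icc 1 l).filter fun i => j ≤ ν i).card) :
    (∏ i ∈ Finset.Icc 1 l, ∏ j ∈ Finset.Icc 1 (ν i),
        (1 - (X : Polynomial ℤ) ^ (ν i + ν' j + 1 - i - j))) *
      (∏ a ∈ Finset.Icc 1 l, ∏ b ∈ Finset.Icc (a + 1) l,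
        (1 - (X : Polynomial ℤ) ^ (ν a - ν b + (b - a))))
    = (∏ a ∈ Finset.Icc 1 l, ∏ b ∈ Finset.Icc (a + 1) l,
        (1 - (X : Polynomial ℤ) ^ (b - a))) *
      (∏ i ∈ Finset.Icc 1 l, ∏ j ∈ Finset.Icc 1 (ν i),
        (1 - (X : Polynomial ℤ) ^ (j + l - i))) := by
  obtain rfl : ν' = conjugatePart l ν := funext hν'
  exact hook_length_polynomial_identity_general (fun k => 1 - (X : Polynomial ℤ) ^ k)
    fun a ha b hb hab => hanti a b ha.1 hab hb.2
end

section
/- Let h be a permutation of a finite set X of size d with cycle type μ (including fixed points), and let i < j be positive integers. Then the number of transpositions τ of X such that the cycle type of τ∘h equals μ with one part equal to i and one part equal to j removed and one part equal to i+j added is exactly i·j·m_i(μ)·m_j(μ). -/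
open Finset Equiv

/-- The cycle type of a permutation including fixed points: the multiset of the sizes of
all cycles (orbits), where each fixed point contributes a part equal to `1`. -/
def cycleTypeFull {X : Type*} [Fintype X] [DecidableEq X] (h : Equiv.Perm X) : Multiset ℕ :=
  h.cycleType + Multiset.replicate (Finset.univ.filter fun x => h x = x).card 1

/-!
Composing `h` with `swap s t` refines the partition of `X` into cycles if `s` and `t` lie in the
same cycle, and otherwise merges their two cycles into one and leaves the others alone. The
prescribed cycle type has one part fewer than that of `h`, so only merging transpositions produce
it, and only those merging a cycle of size `i` with one of size `j`. As `i ≠ j`, such a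
transposition is the same thing as a point in a cycle of size `i` and a point in a cycle of
size `j`, and there are `i * m_i` points of the first kind and `j * m_j` of the second.
-/

theorem le_of_sum_sub_add_sum_eq {α : Type*} [AddCancelCommMonoid α] [PartialOrder α]
    [IsOrderedAddMonoid α] [CanonicallyOrderedAdd α] [DecidableEq α] {M P : Multiset α} (hP : 0 ∉ P)
    (hsum : (M - P).sum + P.sum = M.sum) : P ≤ M := by
  have hM : (M - P).sum + (M ∩ P).sum = M.sum := by
    rw [← Multiset.sum_add, Multiset.sub_add_inter]
  have hinter : (M ∩ P).sum = P.sum := add_left_cancel (hM.trans hsum.symm)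
  have hzero : (P - M).sum = 0 := by
    rw [← add_eq_right (b := (M ∩ P).sum), ← Multiset.sum_add, Multiset.inter_comm,
      Multiset.sub_add_inter, Multiset.inter_comm, hinter]
  have hempty : P - M = 0 := Multiset.eq_zero_of_forall_notMem fun n hn =>
    hP (Multiset.sum_eq_zero_iff.1 hzero n hn ▸ Multiset.mem_of_le tsub_le_self hn)
  exact tsub_eq_zero_iff_le.1 hempty

theorem eq_erase_erase_add_iff {M N : Multiset ℕ} (hsum : N.sum = M.sum) {i j : ℕ} (hi : 0 < i)
    (hj : 0 < j) : N = (M.erase i).erase j + {i + j} ↔ N + {i, j} = M + {i + j} := by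
  have herase : (M.erase i).erase j = M - {i, j} := by
    rw [Multiset.insert_eq_cons, Multiset.sub_cons, Multiset.sub_singleton]
  rw [herase]
  constructor
  · rintro rfl
    have hle : {i, j} ≤ M := le_of_sum_sub_add_sum_eq (by simp; lia) (by simpa using hsum)
    rw [add_right_comm, tsub_add_cancel_of_le hle]
  · intro h
    have hle : {i, j} ≤ M := by
      have : ({i, j} : Multiset ℕ) ≤ (i + j) ::ₘ M := by
        rw [← Multiset.singleton_add, add_comm, ← h]
        exact Multiset.le_add_left _ _
      exact (Multiset.le_cons_of_notMem (by simp; lia)).1 this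
    refine add_right_cancel (b := {i, j}) ?_
    rw [h, add_right_comm, tsub_add_cancel_of_le hle]

theorem add_pair_eq_add_singleton_iff {M N : Multiset ℕ} {a b i j : ℕ} (hi : 0 < i) (hj : 0 < j)
    (hab : N + {a, b} = M + {a + b}) :
    N + {i, j} = M + {i + j} ↔ (a = i ∧ b = j) ∨ (a = j ∧ b = i) := by
  constructor
  · intro hij
    have hparts : ({i, j} : Multiset ℕ) + {a + b} = {a, b} + {i + j} := by
      refine add_left_cancel (a := N + M) ?_
      calc N + M + ({i, j} + {a + b}) = (N + {i, j}) + (M + {a + b}) := add_add_add_comm ..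
        _ = (N + {a, b}) + (M + {i + j}) := by rw [hij, ← hab, add_comm]
        _ = N + M + ({a, b} + {i + j}) := add_add_add_comm ..
    have hsum : i + j ∈ ({i, j} : Multiset ℕ) + {a + b} := by rw [hparts]; simp
    have hmem : i ∈ ({a, b} : Multiset ℕ) + {i + j} := by rw [← hparts]; simp
    simp only [Multiset.insert_eq_cons, Multiset.mem_add, Multiset.mem_cons,
      Multiset.mem_singleton] at hsum hmem
    lia
  · rintro (⟨rfl, rfl⟩ | ⟨rfl, rfl⟩)
    · exact hab
    · rwa [Multiset.pair_comm, add_comm b a]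

theorem swap_injOn_prod {α : Type*} [DecidableEq α] {A B : Set α} (hAB : Disjoint A B) :
    Set.InjOn (fun p : α × α => swap p.1 p.2) (A ×ˢ B) := by
  rintro ⟨s, t⟩ ⟨hs, ht⟩ ⟨u, v⟩ ⟨hu, hv⟩ (heq : swap s t = swap u v)
  have hst : s ≠ t := hAB.ne_of_mem hs ht
  have hswap : swap u v s = t := by rw [← heq, swap_apply_left]
  obtain rfl : s = u := by
    by_contra hsu
    rw [swap_apply_of_ne_of_ne hsu (hAB.ne_of_mem hs hv)] at hswap
    exact hst hswap
  rw [← hswap, swap_apply_left]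

theorem mem_of_sameCycle_of_mapsTo {α : Type*} [Finite α] {h : Perm α} {A : Set α}
    (hA : Set.MapsTo h A A) {x y : α} (hx : x ∈ A) (hxy : h.SameCycle x y) : y ∈ A := by
  obtain ⟨n, rfl⟩ := hxy.exists_nat_pow_eq
  exact hA.perm_pow n hx

-- Along the cycle of `s` up to `h.symm s` both permutations agree; then `h` returns to `s`, whereas
-- `swap s t * h` moves on to `t`.
theorem sameCycle_swap_mul {α : Type*} [Finite α] [DecidableEq α] {h : Perm α} {s t : α}
    (hst : ¬ h.SameCycle s t) : (swap s t * h).SameCycle s t := by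
  set g := swap s t * h with hg
  let A : Set α := {y | h.SameCycle s y ∧ g.SameCycle s y}
  have hA : Set.MapsTo h A A := by
    rintro y ⟨hsy, hgsy⟩
    refine ⟨hsy.apply_right, ?_⟩
    by_cases hys : h y = s
    · exact hys ▸ .refl g s
    · have hyt : h y ≠ t := fun hyt => hst (hyt ▸ hsy.apply_right)
      have hgy : g y = h y := swap_apply_of_ne_of_ne hys hyt
      exact hgy ▸ hgsy.apply_right
  have hpred : h.symm s ∈ A :=
    mem_of_sameCycle_of_mapsTo hA ⟨.refl h s, .refl g s⟩
      (Perm.sameCycle_symm_apply_right.2 (.refl h s))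
  have hgpred : g (h.symm s) = t := by simp [hg]
  exact hgpred ▸ hpred.2.apply_right

theorem card_filter_card_part_eq {α : Type*} [DecidableEq α] {s : Finset α} (P : Finpartition s)
    (n : ℕ) : #{x ∈ s | #(P.part x) = n} = n * #{p ∈ P.parts | #p = n} := by
  have hpart (p : Finset α) (hp : p ∈ P.parts) (hpn : #p = n) :
      {x ∈ {x ∈ s | #(P.part x) = n} | P.part x = p} = p := by
    ext x
    rw [mem_filter, mem_filter, P.part_eq_iff_mem hp]
    refine ⟨And.right, fun hx => ⟨⟨P.subset hp hx, ?_⟩, hx⟩⟩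
    rw [P.part_eq_of_mem hp hx, hpn]
  rw [card_eq_sum_card_fiberwise (f := P.part) (t := {p ∈ P.parts | #p = n}) fun x hx => by
    simpa using hx]
  rw [sum_const_nat (m := n), mul_comm]
  intro p hp
  rw [mem_filter] at hp
  rw [hpart p hp.1 hp.2, hp.2]

section Cycles

variable {X : Type*} [Fintype X] [DecidableEq X] {h : Perm X} {s t x y : X}

instance (h : Perm X) : DecidableRel (Perm.SameCycle.setoid h) :=
  Perm.instDecidableRelSameCycle h

/-- The partition of `X` into the cycles of `h`, fixed points being cycles of size `1`. -/
def cyclePartition (h : Perm X) : Finpartition (univ : Finset X) :=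
  Finpartition.ofSetoid (Perm.SameCycle.setoid h)

/-- The cycle of the point `x` under `h`. Unlike `(h.cycleOf x).support`, it is `{x}` rather than
`∅` when `x` is fixed. -/
abbrev pointCycle (h : Perm X) (x : X) : Finset X :=
  (cyclePartition h).part x

theorem mem_pointCycle : y ∈ pointCycle h x ↔ h.SameCycle x y :=
  Finpartition.mem_part_ofSetoid_iff_rel

theorem mem_pointCycle_self (h : Perm X) (x : X) : x ∈ pointCycle h x :=
  (cyclePartition h).mem_part (mem_univ x)

theorem mem_pointCycle_iff_pointCycle_eq : y ∈ pointCycle h x ↔ pointCycle h y = pointCycle h x :=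
  (cyclePartition h).mem_part_iff_part_eq_part (mem_univ y) (mem_univ x)

theorem mem_parts_cyclePartition {p : Finset X} :
    p ∈ (cyclePartition h).parts ↔ ∃ x, pointCycle h x = p := by
  refine ⟨fun hp => ?_, ?_⟩
  · obtain ⟨x, -, hx⟩ := (cyclePartition h).part_surjOn hp
    exact ⟨x, hx⟩
  · rintro ⟨x, rfl⟩
    exact (cyclePartition h).part_mem.2 (mem_univ x)

theorem pointCycle_of_apply_eq_self (hx : h x = x) : pointCycle h x = {x} := by
  ext y
  rw [mem_pointCycle, mem_singleton]
  exact ⟨fun hxy => (hxy.eq_of_left hx).symm, fun hyx => hyx ▸ Perm.SameCycle.refl _ _⟩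

theorem pointCycle_of_apply_ne_self (hx : h x ≠ x) : pointCycle h x = (h.cycleOf x).support := by
  ext y
  rw [mem_pointCycle, Perm.mem_support_cycleOf_iff' hx]

theorem parts_cyclePartition (h : Perm X) : (cyclePartition h).parts =
    h.cycleFactorsFinset.image Perm.support ∪ ({x | h x = x} : Finset X).image singleton := by
  ext p
  simp only [mem_parts_cyclePartition, mem_union, mem_image, mem_filter, mem_univ, true_and]
  constructor
  · rintro ⟨x, rfl⟩
    by_cases hx : h x = x
    · exact Or.inr ⟨x, hx, (pointCycle_of_apply_eq_self hx).symm⟩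
    · exact Or.inl ⟨h.cycleOf x, Perm.cycleOf_mem_cycleFactorsFinset_iff.2 (Perm.mem_support.2 hx),
        (pointCycle_of_apply_ne_self hx).symm⟩
  · rintro (⟨c, hc, rfl⟩ | ⟨x, hx, rfl⟩)
    · obtain ⟨x, hx⟩ := (Perm.mem_cycleFactorsFinset_iff.1 hc).1.nonempty_support
      refine ⟨x, ?_⟩
      rw [pointCycle_of_apply_ne_self, ← Perm.cycle_is_cycleOf hx hc]
      exact Perm.mem_support.1 (Perm.mem_cycleFactorsFinset_support_le hc hx)
    · exact ⟨x, pointCycle_of_apply_eq_self hx⟩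

theorem injOn_support_cycleFactorsFinset (h : Perm X) :
    Set.InjOn Perm.support (h.cycleFactorsFinset : Set (Perm X)) := by
  intro c hc d hd hcd
  obtain ⟨x, hx⟩ := (Perm.mem_cycleFactorsFinset_iff.1 hc).1.nonempty_support
  rw [Perm.cycle_is_cycleOf hx hc, Perm.cycle_is_cycleOf (hcd ▸ hx) hd]

theorem cycleTypeFull_eq_map_card_parts (h : Perm X) :
    cycleTypeFull h = (cyclePartition h).parts.val.map card := by
  have hdisj : Disjoint (h.cycleFactorsFinset.image Perm.support)
      (({x | h x = x} : Finset X).image singleton) := by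
    rw [disjoint_left]
    rintro p hp hp'
    obtain ⟨c, -, rfl⟩ := mem_image.1 hp
    obtain ⟨x, -, hx⟩ := mem_image.1 hp'
    exact c.card_support_ne_one (by rw [← hx, card_singleton])
  rw [parts_cyclePartition, ← disjUnion_eq_union _ _ hdisj, disjUnion_val, Multiset.map_add,
    image_val_of_injOn (injOn_support_cycleFactorsFinset h),
    image_val_of_injOn singleton_injective.injOn, Multiset.map_map, Multiset.map_map,
    cycleTypeFull, Perm.cycleType_def]
  simp only [Function.comp_def, card_singleton, Multiset.map_const', card_val]

theorem sum_cycleTypeFull (h : Perm X) : (cycleTypeFull h).sum = Fintype.card X := by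
  rw [cycleTypeFull_eq_map_card_parts]
  exact (cyclePartition h).sum_card_parts

theorem card_cycleTypeFull (h : Perm X) :
    (cycleTypeFull h).card = #(cyclePartition h).parts := by
  rw [cycleTypeFull_eq_map_card_parts, Multiset.card_map, card_val]

theorem card_filter_card_pointCycle_eq (h : Perm X) (n : ℕ) :
    #{x | #(pointCycle h x) = n} = n * (cycleTypeFull h).count n := by
  rw [card_filter_card_part_eq, cycleTypeFull_eq_map_card_parts, Multiset.count_map,
    ← filter_val, card_val]
  simp only [eq_comm]

theorem mapsTo_pointCycle (h : Perm X) (x : X) :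
    Set.MapsTo h (pointCycle h x) (pointCycle h x) := fun y hy => by
  rw [mem_coe, mem_pointCycle] at hy ⊢
  exact hy.apply_right

theorem pointCycle_subset_of_mapsTo {A : Finset X} (hA : Set.MapsTo h A A) (hx : x ∈ A) :
    pointCycle h x ⊆ A := fun _ hy =>
  mem_of_sameCycle_of_mapsTo hA hx (mem_pointCycle.1 hy)

theorem pointCycle_swap_mul_subset {A : Finset X} (hA : Set.MapsTo h A A) (hst : s ∈ A ↔ t ∈ A)
    (hx : x ∈ A) : pointCycle (swap s t * h) x ⊆ A :=
  pointCycle_subset_of_mapsTo ((swap_bijOn_self (s := (A : Set X)) hst).mapsTo.comp hA) hx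

theorem pointCycle_swap_mul_subset_pointCycle (hst : h.SameCycle s t) (x : X) :
    pointCycle (swap s t * h) x ⊆ pointCycle h x := by
  refine pointCycle_swap_mul_subset (mapsTo_pointCycle h x) ?_ (mem_pointCycle_self h x)
  rw [mem_pointCycle, mem_pointCycle]
  exact ⟨fun hxs => hxs.trans hst, fun hxt => hxt.trans hst.symm⟩

theorem cyclePartition_swap_mul_le (hst : h.SameCycle s t) :
    cyclePartition (swap s t * h) ≤ cyclePartition h := by
  intro p hp
  obtain ⟨x, rfl⟩ := mem_parts_cyclePartition.1 hp
  exact ⟨pointCycle h x, mem_parts_cyclePartition.2 ⟨x, rfl⟩,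
    pointCycle_swap_mul_subset_pointCycle hst x⟩

theorem pointCycle_swap_mul_eq_of_notMem (hs : s ∉ pointCycle h x) (ht : t ∉ pointCycle h x) :
    pointCycle (swap s t * h) x = pointCycle h x := by
  have hsub : pointCycle (swap s t * h) x ⊆ pointCycle h x :=
    pointCycle_swap_mul_subset (mapsTo_pointCycle h x) (iff_of_false hs ht)
      (mem_pointCycle_self h x)
  refine hsub.antisymm ?_
  have hback := pointCycle_swap_mul_subset (mapsTo_pointCycle (swap s t * h) x)
    (iff_of_false (fun h' => hs (hsub h')) fun h' => ht (hsub h')) (mem_pointCycle_self _ x)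
  rwa [swap_mul_self_mul] at hback

theorem pointCycle_swap_mul_left (hst : ¬ h.SameCycle s t) :
    pointCycle (swap s t * h) s = pointCycle h s ∪ pointCycle h t := by
  have hjoin := sameCycle_swap_mul hst
  have hsub (x : X) : pointCycle h x ⊆ pointCycle (swap s t * h) x := by
    simpa only [swap_mul_self_mul] using pointCycle_swap_mul_subset_pointCycle hjoin x
  apply Subset.antisymm
  · refine pointCycle_swap_mul_subset ?_ (iff_of_true ?_ ?_) ?_
    · rw [coe_union]
      exact (mapsTo_pointCycle h s).union_union (mapsTo_pointCycle h t)
    · exact mem_union_left _ (mem_pointCycle_self h s)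
    · exact mem_union_right _ (mem_pointCycle_self h t)
    · exact mem_union_left _ (mem_pointCycle_self h s)
  · refine union_subset (hsub s) ?_
    rw [← mem_pointCycle_iff_pointCycle_eq.1 (mem_pointCycle.2 hjoin)]
    exact hsub t

theorem parts_cyclePartition_swap_mul (hst : ¬ h.SameCycle s t) :
    (cyclePartition (swap s t * h)).parts =
      insert (pointCycle h s ∪ pointCycle h t)
        ((cyclePartition h).parts \ {pointCycle h s, pointCycle h t}) := by
  have hleft := pointCycle_swap_mul_left hst
  have hother (x : X) (hs : pointCycle h x ≠ pointCycle h s)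
      (ht : pointCycle h x ≠ pointCycle h t) :
      pointCycle (swap s t * h) x = pointCycle h x :=
    pointCycle_swap_mul_eq_of_notMem (fun hx => hs (mem_pointCycle_iff_pointCycle_eq.1 hx).symm)
      fun hx => ht (mem_pointCycle_iff_pointCycle_eq.1 hx).symm
  ext p
  simp only [mem_insert, mem_sdiff, mem_singleton, not_or, mem_parts_cyclePartition]
  constructor
  · rintro ⟨x, rfl⟩
    by_cases hx : x ∈ pointCycle h s ∪ pointCycle h t
    · exact Or.inl ((mem_pointCycle_iff_pointCycle_eq.1 (hleft ▸ hx)).trans hleft)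
    · rw [mem_union, not_or, mem_pointCycle_iff_pointCycle_eq,
        mem_pointCycle_iff_pointCycle_eq] at hx
      rw [hother x hx.1 hx.2]
      exact Or.inr ⟨⟨x, rfl⟩, hx⟩
  · rintro (rfl | ⟨⟨x, rfl⟩, hs, ht⟩)
    · exact ⟨s, hleft⟩
    · exact ⟨x, hother x hs ht⟩

theorem disjoint_pointCycle (hst : ¬ h.SameCycle s t) :
    Disjoint (pointCycle h s) (pointCycle h t) := by
  rw [disjoint_left]
  intro x hs ht
  exact hst ((mem_pointCycle.1 hs).trans (mem_pointCycle.1 ht).symm)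

theorem cycleTypeFull_swap_mul_add (hst : ¬ h.SameCycle s t) :
    cycleTypeFull (swap s t * h) + {#(pointCycle h s), #(pointCycle h t)} =
      cycleTypeFull h + {#(pointCycle h s) + #(pointCycle h t)} := by
  set C := pointCycle h s
  set D := pointCycle h t
  have hdisj : Disjoint C D := disjoint_pointCycle hst
  have hne : C ≠ D := hdisj.ne (ne_empty_of_mem (mem_pointCycle_self h s))
  have hsub : {C, D} ⊆ (cyclePartition h).parts := by
    simp [insert_subset_iff, C, D]
  have hunion : C ∪ D ∉ (cyclePartition h).parts \ {C, D} := by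
    rw [mem_sdiff, mem_insert]
    rintro ⟨hparts, hnot⟩
    have hs : s ∈ C ∪ D := mem_union_left _ (mem_pointCycle_self h s)
    exact hnot (Or.inl ((cyclePartition h).part_eq_of_mem hparts hs).symm)
  have hpair : ({C, D} : Finset (Finset X)).val = {C, D} :=
    insert_val_of_notMem (notMem_singleton.2 hne)
  have hold : (cyclePartition h).parts.val =
      ((cyclePartition h).parts \ {C, D}).val + {C, D} := by
    rw [sdiff_val, ← hpair, tsub_add_cancel_of_le (val_le_iff.2 hsub)]
  rw [cycleTypeFull_eq_map_card_parts, cycleTypeFull_eq_map_card_parts,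
    parts_cyclePartition_swap_mul hst, insert_val_of_notMem hunion, hold]
  simp only [Multiset.map_add, Multiset.insert_eq_cons, Multiset.map_singleton,
    card_union_of_disjoint hdisj, ← Multiset.singleton_add]
  abel

theorem cycleTypeFull_swap_mul_eq_iff {i j : ℕ} (hi : 0 < i) (hj : 0 < j) :
    cycleTypeFull (swap s t * h) = ((cycleTypeFull h).erase i).erase j + {i + j} ↔
      ¬ h.SameCycle s t ∧ ((#(pointCycle h s) = i ∧ #(pointCycle h t) = j) ∨
        (#(pointCycle h s) = j ∧ #(pointCycle h t) = i)) := by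
  rw [eq_erase_erase_add_iff (by rw [sum_cycleTypeFull, sum_cycleTypeFull]) hi hj]
  by_cases hst : h.SameCycle s t
  · refine iff_of_false (fun heq => ?_) fun hand => hand.1 hst
    have hmono := Finpartition.card_mono (cyclePartition_swap_mul_le hst)
    have hcard := congrArg Multiset.card heq
    simp only [Multiset.card_add, Multiset.card_pair, Multiset.card_singleton,
      card_cycleTypeFull] at hcard
    lia
  · rw [add_pair_eq_add_singleton_iff hi hj (cycleTypeFull_swap_mul_add hst)]
    exact (and_iff_right hst).symm

theorem setOf_isSwap_cycleTypeFull_mul_eq_image (h : Perm X) {i j : ℕ} (hi : 0 < i) (hj : 0 < j)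
    (hij : i ≠ j) :
    {τ : Perm X | τ.IsSwap ∧
        cycleTypeFull (τ * h) = ((cycleTypeFull h).erase i).erase j + {i + j}} =
      (fun p : X × X => swap p.1 p.2) ''
        ({x | #(pointCycle h x) = i} ×ˢ {x | #(pointCycle h x) = j}) := by
  ext τ
  constructor
  · rintro ⟨⟨s, t, -, rfl⟩, htype⟩
    obtain ⟨-, ⟨hs, ht⟩ | ⟨hs, ht⟩⟩ := (cycleTypeFull_swap_mul_eq_iff hi hj).1 htype
    · exact ⟨(s, t), ⟨hs, ht⟩, rfl⟩
    · exact ⟨(t, s), ⟨ht, hs⟩, swap_comm t s⟩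
  · rintro ⟨⟨s, t⟩, ⟨hs : #(pointCycle h s) = i, ht : #(pointCycle h t) = j⟩, rfl⟩
    have hst : ¬ h.SameCycle s t := fun hst => hij <| by
      rw [← hs, ← ht, mem_pointCycle_iff_pointCycle_eq.1 (mem_pointCycle.2 hst)]
    exact ⟨⟨s, t, fun heq => hst (heq ▸ .refl h s), rfl⟩,
      (cycleTypeFull_swap_mul_eq_iff hi hj).2 ⟨hst, Or.inl ⟨hs, ht⟩⟩⟩

theorem ncard_setOf_card_pointCycle_eq (h : Perm X) (n : ℕ) :
    {x | #(pointCycle h x) = n}.ncard = n * (cycleTypeFull h).count n := by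
  rw [← card_filter_card_pointCycle_eq, ← Set.ncard_coe_finset, coe_filter_univ]

end Cycles

/-- for a permutation `h` with cycle type `μ` (including fixed points) and
positive integers `i < j`, the number of transpositions `τ` such that the cycle type of
`τ ∘ h` is `μ` with one part `i` and one part `j` removed and one part `i + j` added is
exactly `i · j · m_i(μ) · m_j(μ)`. -/
theorem count_join_transpositions_ne
    {X : Type*} [Fintype X] [DecidableEq X] (h : Equiv.Perm X) (i j : ℕ)
    (hi : 0 < i) (hij : i < j) :
    Set.ncard {τ : Equiv.Perm X | τ.IsSwap ∧
        cycleTypeFull (τ * h)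
          = ((cycleTypeFull h).erase i).erase j + {i + j}}
      = i * j * (cycleTypeFull h).count i * (cycleTypeFull h).count j := by
  have hdisj : Disjoint {x | #(pointCycle h x) = i} {x | #(pointCycle h x) = j} :=
    Set.disjoint_left.2 fun _ hxi hxj => hij.ne (hxi.symm.trans hxj)
  rw [setOf_isSwap_cycleTypeFull_mul_eq_image h hi (hi.trans hij) hij.ne,
    (swap_injOn_prod hdisj).ncard_image, Set.ncard_prod, ncard_setOf_card_pointCycle_eq,
    ncard_setOf_card_pointCycle_eq]
  ring
end

section
/- Let r ≥ 1 be an integer and let J_0, J_1, …, J_r be polynomials with rational coefficients in a variable τ such that deg J_k ≤ r − k for each 0 ≤ k ≤ r. Suppose that for every integer i with 0 ≤ i ≤ r−1, the polynomial ∑_{k=0}^{r} (r−k)^i · τ^k · J_k(τ) has degree at most i. Then for every 0 ≤ k ≤ r, J_k = ((−1)^k / k!) · (d^k J_0 / dτ^k), the k-th formal derivative of J_0 divided by k! with sign (−1)^k. In particular J_1 = −dJ_0/dτ. -/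
open Finset Polynomial

/-!
Comparing coefficients of `τ ^ m`, for `m ≤ r` the hypotheses with `i < m` say that the sequence
`b k = (J k).coeff (m - k)`, `k ≤ m`, satisfies `∑ k, (r - k) ^ i * b k = 0`. The powers may be
replaced by any polynomials of degree `< m` in `k`, in particular by falling factorials, so
`B = ∑ k, b k X ^ k` vanishes to order `m` at `1`. Having degree at most `m`, it is
`B = b 0 (1 - X) ^ m`, that is, `b k = (-1) ^ k * m.choose k * b 0`, which is the coefficientwise
form of `J k = (-1) ^ k * hasseDeriv k (J 0)`. For `m > r` the same argument with `r` in place of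
`m` shows that every `b k` is a multiple of `b 0 = (J 0).coeff m = 0`.
-/

section Moments

lemma sum_eval_mul_eq_zero_of_sum_pow_mul_eq_zero {R ι : Type*} [Semiring R] {s : Finset ι}
    {x b : ι → R} {m : ℕ} (h : ∀ i < m, ∑ k ∈ s, x k ^ i * b k = 0)
    {p : R[X]} (hp : p.natDegree < m) : ∑ k ∈ s, p.eval (x k) * b k = 0 := by
  simp_rw [eval_eq_sum_range' hp, sum_mul, mul_assoc]
  rw [sum_comm]
  refine sum_eq_zero fun i hi => ?_
  rw [← mul_sum, h i (mem_range.mp hi), mul_zero]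

lemma natDegree_descPochhammer_le (R : Type*) [Ring R] (n : ℕ) :
    (descPochhammer R n).natDegree ≤ n := by
  rw [← descPochhammer_map (Int.castRingHom R)]
  exact natDegree_map_le.trans (descPochhammer_natDegree ℤ n).le

variable {R : Type*} [CommRing R]

lemma sum_descFactorial_mul_eq_zero {c : R} {b : ℕ → R} {s : Finset ℕ} {m : ℕ}
    (h : ∀ i < m, ∑ k ∈ s, (c - k) ^ i * b k = 0) {i : ℕ} (hi : i < m) :
    ∑ k ∈ s, (k.descFactorial i : R) * b k = 0 := by
  have hdeg : ((descPochhammer R i).comp (C c - X)).natDegree < m :=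
    calc ((descPochhammer R i).comp (C c - X)).natDegree
        ≤ (descPochhammer R i).natDegree * (C c - X).natDegree := natDegree_comp_le
      _ ≤ i * 1 := Nat.mul_le_mul (natDegree_descPochhammer_le R i) (by compute_degree)
      _ < m := by rwa [mul_one]
  simpa only [eval_comp, eval_sub, eval_C, eval_X, sub_sub_cancel,
    descPochhammer_eval_eq_descFactorial] using
    sum_eval_mul_eq_zero_of_sum_pow_mul_eq_zero h hdeg

end Moments

section VanishingAtOne

lemma eval_one_hasseDeriv {R : Type*} [Semiring R] {f : R[X]} {n : ℕ} (hf : f.natDegree < n)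
    (i : ℕ) : (hasseDeriv i f).eval 1 = ∑ k ∈ range n, (k.choose i : R) * f.coeff k := by
  rw [hasseDeriv_apply, sum_over_range' _ (by simp) n hf, eval_finsetSum]
  simp only [eval_monomial, one_pow, mul_one]

variable {R : Type*} [CommRing R]

lemma exists_eq_C_mul_X_sub_C_pow_of_hasseDeriv_eval_eq_zero {f : R[X]} {a : R} {m : ℕ}
    (hf : f.natDegree ≤ m) (h : ∀ i < m, (hasseDeriv i f).eval a = 0) :
    ∃ c : R, f = C c * (X - C a) ^ m := by
  refine ⟨(taylor a f).coeff m, taylor_injective a ?_⟩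
  have htaylor : taylor a (C ((taylor a f).coeff m) * (X - C a) ^ m)
      = C ((taylor a f).coeff m) * X ^ m := by
    rw [taylor_mul, taylor_C, taylor_pow, map_sub, taylor_X, taylor_C, add_sub_cancel_right]
  rw [htaylor]
  ext n
  rw [coeff_C_mul_X_pow]
  split_ifs with hn
  · rw [hn]
  · rcases lt_or_gt_of_ne hn with hlt | hgt
    · rw [taylor_coeff, h n hlt]
    · exact coeff_eq_zero_of_natDegree_lt (by rw [natDegree_taylor]; lia)

lemma eq_C_mul_one_sub_X_pow_of_hasseDeriv_eval_one_eq_zero {f : R[X]} {m : ℕ}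
    (hf : f.natDegree ≤ m) (h : ∀ i < m, (hasseDeriv i f).eval 1 = 0) :
    f = C (f.coeff 0) * (1 - X) ^ m := by
  obtain ⟨c, hc⟩ := exists_eq_C_mul_X_sub_C_pow_of_hasseDeriv_eval_eq_zero hf h
  have hcoeff : f.coeff 0 = c * (-1) ^ m := by
    simp [hc, coeff_zero_eq_eval_zero]
  rw [hcoeff, C_mul, mul_assoc, C_pow, ← mul_pow, C_neg, C_1, neg_one_mul, neg_sub]
  exact hc

lemma coeff_one_sub_X_pow (m k : ℕ) :
    ((1 - X : R[X]) ^ m).coeff k = (-1) ^ k * (m.choose k : R) := by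
  have hcomp : (1 - X : R[X]) ^ m = ((1 + X) ^ m).comp (C (-1) * X) := by
    simp [sub_eq_add_neg]
  rw [hcomp, comp_C_mul_X_coeff, coeff_one_add_X_pow, mul_comm]

theorem eq_neg_one_pow_mul_choose_mul_of_sum_sub_pow_mul_eq_zero [IsAddTorsionFree R] {c : R}
    {b : ℕ → R} {m : ℕ} (h : ∀ i < m, ∑ k ∈ range (m + 1), (c - k) ^ i * b k = 0)
    {k : ℕ} (hk : k ≤ m) : b k = (-1) ^ k * (m.choose k : R) * b 0 := by
  let B : R[X] := ∑ j ∈ range (m + 1), monomial j (b j)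
  have hcoeff : ∀ j ≤ m, B.coeff j = b j := fun j hj => by
    simp [B, finsetSum_coeff, coeff_monomial, Nat.lt_succ_of_le hj]
  have hdeg : B.natDegree ≤ m := natDegree_sum_le_of_forall_le _ _ fun j hj =>
    (natDegree_monomial_le _).trans (mem_range_succ_iff.mp hj)
  have hvanish : ∀ i < m, (hasseDeriv i B).eval 1 = 0 := fun i hi => by
    have hfactorial : i.factorial • (hasseDeriv i B).eval 1 = 0 := by
      rw [← sum_descFactorial_mul_eq_zero h hi, eval_one_hasseDeriv (Nat.lt_succ_of_le hdeg),
        smul_sum]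
      refine sum_congr rfl fun j hj => ?_
      rw [hcoeff j (mem_range_succ_iff.mp hj), nsmul_eq_mul, ← mul_assoc,
        Nat.descFactorial_eq_factorial_mul_choose, Nat.cast_mul]
    exact (smul_eq_zero.mp hfactorial).resolve_left i.factorial_ne_zero
  rw [← hcoeff k hk, eq_C_mul_one_sub_X_pow_of_hasseDeriv_eval_one_eq_zero hdeg hvanish,
    coeff_C_mul, coeff_one_sub_X_pow, hcoeff 0 m.zero_le, mul_comm]

end VanishingAtOne

section PolynomialSystem

lemma coeff_sum_C_mul_X_pow_mul {R : Type*} [Semiring R] (a : ℕ → R) (J : ℕ → R[X]) (r m : ℕ) :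
    (∑ k ∈ range (r + 1), C (a k) * X ^ k * J k).coeff m
      = ∑ k ∈ range (min r m + 1), a k * (J k).coeff (m - k) := by
  simp_rw [finsetSum_coeff, mul_assoc, coeff_C_mul, coeff_X_pow_mul', mul_ite, mul_zero]
  rw [← sum_filter]
  congr 1
  ext k
  simp only [mem_filter, mem_range]
  lia

lemma coeff_tsub_eq_of_degree_sum_le {R : Type*} [CommRing R] [IsAddTorsionFree R] {r : ℕ}
    {J : ℕ → R[X]}
    (hsys : ∀ i < r,
      (∑ k ∈ range (r + 1), C (((r - k : ℕ) : R) ^ i) * X ^ k * J k).degree ≤ (i : WithBot ℕ))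
    {k m : ℕ} (hkr : k ≤ r) (hkm : k ≤ m) :
    (J k).coeff (m - k) = (-1) ^ k * ((min r m).choose k : R) * (J 0).coeff m := by
  refine eq_neg_one_pow_mul_choose_mul_of_sum_sub_pow_mul_eq_zero (c := (r : R))
    (b := fun k => (J k).coeff (m - k)) (fun i hi => ?_) (le_min hkr hkm)
  have hir : i < r := hi.trans_le (min_le_left r m)
  have him : i < m := hi.trans_le (min_le_right r m)
  rw [← coeff_eq_zero_of_degree_lt ((hsys i hir).trans_lt (Nat.cast_lt.mpr him)),
    coeff_sum_C_mul_X_pow_mul]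
  refine sum_congr rfl fun j hj => ?_
  have hjr : j ≤ r := (mem_range_succ_iff.mp hj).trans (min_le_left r m)
  rw [Nat.cast_sub hjr]

theorem polynomial_system_derivative_general {R : Type*} [CommRing R] [IsAddTorsionFree R]
    (r : ℕ) (J : ℕ → R[X]) (hdeg : (J 0).degree ≤ r)
    (hsys : ∀ i < r,
      (∑ k ∈ range (r + 1), C (((r - k : ℕ) : R) ^ i) * X ^ k * J k).degree ≤ (i : WithBot ℕ))
    (k : ℕ) (hk : k ≤ r) : J k = (-1) ^ k * hasseDeriv k (J 0) := by
  ext n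
  have hcoeff := coeff_tsub_eq_of_degree_sum_le hsys hk (Nat.le_add_left k n)
  have hsign : ((-1) ^ k * hasseDeriv k (J 0)).coeff n
      = (-1) ^ k * ((n + k).choose k * (J 0).coeff (n + k)) := by
    rw [← hasseDeriv_coeff, ← coeff_C_mul, C_pow, C_neg, C_1]
  rw [Nat.add_sub_cancel] at hcoeff
  rw [hcoeff, hsign, mul_assoc]
  rcases le_or_gt (n + k) r with hle | hgt
  · rw [min_eq_right hle]
  · rw [coeff_eq_zero_of_degree_lt (hdeg.trans_lt (Nat.cast_lt.mpr hgt))]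
    simp only [mul_zero]

end PolynomialSystem

lemma hasseDeriv_eq_inv_factorial_smul {K : Type*} [DivisionRing K] [CharZero K] (k : ℕ)
    (p : K[X]) : hasseDeriv k p = (k.factorial : K)⁻¹ • derivative^[k] p := by
  rw [← factorial_smul_hasseDeriv, LinearMap.smul_apply, ← Nat.cast_smul_eq_nsmul K,
    inv_smul_smul₀ (Nat.cast_ne_zero.mpr k.factorial_ne_zero)]

/-- let `r ≥ 1` and let `J_0, …, J_r ∈ ℚ[τ]` with `deg J_k ≤ r − k`.
If for every `0 ≤ i ≤ r−1` the polynomial `∑_{k=0}^{r} (r−k)^i · τ^k · J_k(τ)` has degree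
at most `i`, then `J_k = ((−1)^k / k!) · (d^k J_0 / dτ^k)` for all `0 ≤ k ≤ r`;
in particular `J_1 = −dJ_0/dτ`. -/
theorem polynomial_system_derivative
    (r : ℕ) (hr : 1 ≤ r) (J : ℕ → Polynomial ℚ)
    (hdeg : ∀ k : ℕ, k ≤ r → (J k).degree ≤ ((r - k : ℕ) : WithBot ℕ))
    (hsys : ∀ i : ℕ, i < r →
      (∑ k ∈ Finset.range (r + 1),
          Polynomial.C (((r - k : ℕ) : ℚ) ^ i) * Polynomial.X ^ k * J k).degree
        ≤ (i : WithBot ℕ)) :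
    ∀ k : ℕ, k ≤ r →
      J k = ((-1) ^ k / (Nat.factorial k : ℚ)) • (Polynomial.derivative^[k] (J 0)) := by
  intro k hk
  rw [polynomial_system_derivative_general r J (hdeg 0 r.zero_le) hsys k hk,
    hasseDeriv_eq_inv_factorial_smul, div_eq_mul_inv, mul_smul, smul_eq_C_mul ((-1) ^ k), C_pow,
    C_neg, C_1]
end
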